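/- For every linearly independent (LI) ensemble (p_i, ρ_i)_{i=1}^m on ℂ^n there exists an LI ensemble (q_i, σ_i)_{i=1}^m with the column space of σ_i equal to the column space of ρ_i for every i, such that the pretty good measurement of (q_i, σ_i) is an optimal POVM for the minimum error discrimination of (p_i, ρ_i). -/

import Mathlib

open Matrix
open scoped ComplexOrder

noncomputable section

/-- Rank-one outer product `x x*` as an `n × n` complex matrix. -/
def outer {n : ℕ} (x : Fin n → ℂ) : Matrix (Fin n) (Fin n) ℂ :=
  Matrix.vecMulVec x (star x)

/-- A POVM indexed by `ι`: positive semidefinite elements summing to the identity. -/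
def IsPOVM {ι : Type} [Fintype ι] {n : ℕ} (E : ι → Matrix (Fin n) (Fin n) ℂ) : Prop :=
  (∀ i, (E i).PosSemidef) ∧ ∑ i, E i = 1

/-- Success probability of the POVM `E` for the ensemble `(p, ρ)`. -/
def succProb {ι : Type} [Fintype ι] {n : ℕ} (p : ι → ℝ)
    (ρ E : ι → Matrix (Fin n) (Fin n) ℂ) : ℝ :=
  ∑ i, p i * ((ρ i * E i).trace).re

/-- `P` is a POVM maximizing the success probability for the ensemble `(p, ρ)`. -/
def IsOptimal {ι : Type} [Fintype ι] {n : ℕ} (p : ι → ℝ)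
    (ρ P : ι → Matrix (Fin n) (Fin n) ℂ) : Prop :=
  IsPOVM P ∧ ∀ E, IsPOVM E → succProb p ρ E ≤ succProb p ρ P

/-- An ensemble of states: positive probabilities summing to 1, states positive
semidefinite of trace 1. -/
def IsEnsemble {ι : Type} [Fintype ι] {n : ℕ} (p : ι → ℝ)
    (ρ : ι → Matrix (Fin n) (Fin n) ℂ) : Prop :=
  (∀ i, 0 < p i) ∧ ∑ i, p i = 1 ∧ (∀ i, (ρ i).PosSemidef) ∧ ∀ i, (ρ i).trace = 1

/-- A linearly independent (LI) ensemble: the ranks sum to `n` and the column spaces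
of the states together span `ℂ^n`. -/
def IsLIEnsemble {ι : Type} [Fintype ι] {n : ℕ} (p : ι → ℝ)
    (ρ : ι → Matrix (Fin n) (Fin n) ℂ) : Prop :=
  IsEnsemble p ρ ∧ (∑ i, (ρ i).rank = n) ∧
    (⨆ i, LinearMap.range (ρ i).mulVecLin) = ⊤

/-- A projective measurement: mutually orthogonal Hermitian idempotents summing to
the identity. -/
def IsProjectiveMeasurement {ι : Type} [Fintype ι] {n : ℕ}
    (P : ι → Matrix (Fin n) (Fin n) ℂ) : Prop :=
  (∀ i j, i ≠ j → P i * P j = 0) ∧ (∀ i, P i * P i = P i) ∧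
    (∀ i, (P i).IsHermitian) ∧ ∑ i, P i = 1

/-- The pretty good measurement of the ensemble `(q, σ)` (with elements
`S^{-1/2} qᵢσᵢ S^{-1/2}`, `S = ∑ qⱼσⱼ`, `S^{1/2}` the unique positive definite square
root of `S`) is an optimal POVM for the minimum error discrimination of `(p, ρ)`. -/
def PGMIsOptimal {m n : ℕ} (q : Fin m → ℝ) (σ : Fin m → Matrix (Fin n) (Fin n) ℂ)
    (p : Fin m → ℝ) (ρ : Fin m → Matrix (Fin n) (Fin n) ℂ) : Prop :=
  ∀ R : Matrix (Fin n) (Fin n) ℂ, R.PosDef → R * R = ∑ j, (q j : ℂ) • σ j →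
    IsOptimal p ρ (fun i => R⁻¹ * ((q i : ℂ) • σ i) * R⁻¹)


/-!
Some POVM `P` is optimal, by compactness. Compressing `P` by `1 - ε v v*` and giving the defect to
outcome `j` cannot improve it, and to first order in `ε` this says that the Hermitian part of
`K = ∑ pᵢ ρᵢ Pᵢ` dominates each `pⱼ ρⱼ`. The gaps `Re K - pⱼ ρⱼ`, multiplied by `Pⱼ`, have
total trace zero, so each product vanishes; hence `K` is Hermitian and `K Pⱼ = pⱼ ρⱼ Pⱼ`.

Linear independence makes `K` positive definite, so `rank Pᵢ = rank (K Pᵢ) ≤ rank ρᵢ`. Both ranks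
sum to `n`, so equality holds and `K Pᵢ K` has the column space of `ρᵢ`. Since
`∑ K Pᵢ K = K²`, the pretty good measurement of the normalized family `K Pᵢ K` is `P` itself.
-/

section RangeAndRank

variable {ι n 𝕜 : Type*} [Fintype ι] [Fintype n] [Field 𝕜]

theorem rank_add_le {m : Type*} (A B : Matrix m n 𝕜) : (A + B).rank ≤ A.rank + B.rank := by
  unfold Matrix.rank
  rw [mulVecLin_add]
  exact (Submodule.finrank_mono (LinearMap.range_add_le _ _)).trans
    (Submodule.finrank_add_le_finrank_add_finrank _ _)

theorem rank_sum_le {m : Type*} (A : ι → Matrix m n 𝕜) : (∑ i, A i).rank ≤ ∑ i, (A i).rank :=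
  Finset.le_sum_of_subadditive (fun A : Matrix m n 𝕜 => A.rank) rank_zero.le rank_add_le _ A

theorem range_mulVecLin_smul {m : Type*} {c : 𝕜} (hc : c ≠ 0) (A : Matrix m n 𝕜) :
    LinearMap.range (c • A).mulVecLin = LinearMap.range A.mulVecLin := by
  have hsmul : (c • A).mulVecLin = c • A.mulVecLin := LinearMap.ext fun x => smul_mulVec c A x
  rw [hsmul, LinearMap.range_smul _ _ hc]

theorem range_mulVecLin_mul_le {m l : Type*} [Fintype l] (A : Matrix m n 𝕜) (B : Matrix n l 𝕜) :
    LinearMap.range (A * B).mulVecLin ≤ LinearMap.range A.mulVecLin := by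
  rw [mulVecLin_mul]
  exact LinearMap.range_comp_le_range _ _

variable [DecidableEq n]

theorem rank_eq_of_sum_eq_one {P A : ι → Matrix n n 𝕜} (hP : ∑ i, P i = 1)
    (hA : ∑ i, (A i).rank = Fintype.card n) (hle : ∀ i, (P i).rank ≤ (A i).rank) (i : ι) :
    (P i).rank = (A i).rank := by
  have hcard : Fintype.card n ≤ ∑ i, (P i).rank := by
    simpa only [hP, rank_one] using rank_sum_le P
  have hsum : ∑ i, (P i).rank = ∑ i, (A i).rank :=
    (Finset.sum_le_sum fun i _ => hle i).antisymm (hA.trans_le hcard)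
  exact (Finset.sum_eq_sum_iff_of_le fun i _ => hle i).1 hsum i (Finset.mem_univ i)

theorem range_mulVecLin_mul_mul_eq {P A : ι → Matrix n n 𝕜} {K : Matrix n n 𝕜}
    (hK : IsUnit K.det) (hP : ∑ i, P i = 1) (hA : ∑ i, (A i).rank = Fintype.card n)
    (hle : ∀ i, LinearMap.range (K * P i).mulVecLin ≤ LinearMap.range (A i).mulVecLin) (i : ι) :
    LinearMap.range (K * P i * K).mulVecLin = LinearMap.range (A i).mulVecLin := by
  have hrank (j : ι) : (K * P j).rank = (P j).rank := rank_mul_eq_right_of_isUnit_det _ _ hK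
  have hPA : (P i).rank = (A i).rank :=
    rank_eq_of_sum_eq_one hP hA (fun j => hrank j ▸ Submodule.finrank_mono (hle j)) i
  refine Submodule.eq_of_le_of_finrank_eq ((range_mulVecLin_mul_le _ _).trans (hle i)) ?_
  change (K * P i * K).rank = (A i).rank
  rw [rank_mul_eq_left_of_isUnit_det _ _ hK, hrank, hPA]

end RangeAndRank

section PositiveSemidefinite

variable {ι n 𝕜 : Type*} [RCLike 𝕜]

theorem posSemidef_single [DecidableEq ι] {A : Matrix n n 𝕜} (hA : A.PosSemidef)
    (i j : ι) : (Pi.single (M := fun _ => Matrix n n 𝕜) j A i).PosSemidef := by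
  rw [Pi.single_apply]
  split_ifs
  exacts [hA, .zero]

theorem conjTranspose_one_sub_smul [DecidableEq n] {V : Matrix n n 𝕜} (hV : V.IsHermitian)
    (ε : ℝ) : (1 - ε • V)ᴴ = 1 - ε • V := by
  rw [conjTranspose_sub, conjTranspose_one, conjTranspose_smul, hV.eq, star_trivial]

variable [Fintype n]

theorem eq_of_mul_self_eq_mul_self {A B : Matrix n n 𝕜} (hA : A.PosSemidef) (hB : B.PosSemidef)
    (h : A * A = B * B) : A = B := by
  classical
  open scoped MatrixOrder Matrix.Norms.L2Operator in
  exact (CFC.mul_self_eq_mul_self_iff A B hA.nonneg hB.nonneg).1 h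

theorem exists_eq_conjTranspose_mul_self {A : Matrix n n 𝕜} (hA : A.PosSemidef) :
    ∃ B : Matrix n n 𝕜, A = Bᴴ * B := by
  classical
  open scoped MatrixOrder Matrix.Norms.L2Operator in
  exact CStarAlgebra.nonneg_iff_eq_star_mul_self.1 hA.nonneg

theorem trace_mul_nonneg_of_posSemidef {A B : Matrix n n 𝕜} (hA : A.PosSemidef)
    (hB : B.PosSemidef) : 0 ≤ (A * B).trace := by
  obtain ⟨D, rfl⟩ := exists_eq_conjTranspose_mul_self hB
  rw [← mul_assoc, trace_mul_comm, ← mul_assoc]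
  exact (hA.mul_mul_conjTranspose_same D).trace_nonneg

theorem mul_eq_zero_of_trace_mul_eq_zero {A B : Matrix n n 𝕜} (hA : A.PosSemidef)
    (hB : B.PosSemidef) (h : (A * B).trace = 0) : A * B = 0 := by
  obtain ⟨C, rfl⟩ := exists_eq_conjTranspose_mul_self hA
  obtain ⟨D, rfl⟩ := exists_eq_conjTranspose_mul_self hB
  have hCD : C * Dᴴ = 0 := by
    rw [← trace_conjTranspose_mul_self_eq_zero_iff, ← h, conjTranspose_mul,
      conjTranspose_conjTranspose, ← mul_assoc (Cᴴ * C), trace_mul_comm (Cᴴ * C * Dᴴ)]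
    simp only [mul_assoc]
  rw [mul_assoc, ← mul_assoc C, hCD, zero_mul, mul_zero]

theorem mulVec_eq_zero_of_sub_posSemidef {A B : Matrix n n 𝕜} (hB : B.PosSemidef)
    (hAB : (A - B).PosSemidef) {x : n → 𝕜} (hx : A *ᵥ x = 0) : B *ᵥ x = 0 := by
  have hle : star x ⬝ᵥ B *ᵥ x ≤ 0 := by
    simpa [sub_mulVec, hx] using hAB.dotProduct_mulVec_nonneg x
  exact (hB.dotProduct_mulVec_zero_iff x).1 (hle.antisymm (hB.dotProduct_mulVec_nonneg x))

theorem eq_zero_of_forall_mulVec_eq_zero {A : ι → Matrix n n 𝕜} (hA : ∀ i, (A i).IsHermitian)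
    (hspan : ⨆ i, LinearMap.range (A i).mulVecLin = ⊤) {x : n → 𝕜} (hx : ∀ i, A i *ᵥ x = 0) :
    x = 0 := by
  have hle : ⨆ i, LinearMap.range (A i).mulVecLin ≤
      LinearMap.ker (dotProductBilin 𝕜 𝕜 (star x)) := by
    refine iSup_le fun i => ?_
    rintro _ ⟨y, rfl⟩
    have hxA : star x ᵥ* A i = 0 := by rw [← (hA i).eq, ← star_mulVec, hx, star_zero]
    change star x ⬝ᵥ (A i *ᵥ y) = 0
    rw [dotProduct_mulVec, hxA, zero_dotProduct]
  have hself : star x ⬝ᵥ x = 0 := (hspan ▸ hle) Submodule.mem_top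
  exact dotProduct_star_self_eq_zero.1 hself

theorem posDef_of_sub_posSemidef [Nonempty ι] {A : ι → Matrix n n 𝕜} {K : Matrix n n 𝕜}
    (hA : ∀ i, (A i).PosSemidef) (hspan : ⨆ i, LinearMap.range (A i).mulVecLin = ⊤)
    (hK : ∀ i, (K - A i).PosSemidef) : K.PosDef := by
  obtain ⟨i₀⟩ := ‹Nonempty ι›
  have hKpos : K.PosSemidef := by simpa only [sub_add_cancel] using (hK i₀).add (hA i₀)
  refine .of_dotProduct_mulVec_pos hKpos.1 fun x hx => ?_
  refine (hKpos.dotProduct_mulVec_nonneg x).lt_of_ne' fun h => hx ?_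
  have hKx : K *ᵥ x = 0 := (hKpos.dotProduct_mulVec_zero_iff x).1 h
  exact eq_zero_of_forall_mulVec_eq_zero (fun i => (hA i).1) hspan fun i =>
    mulVec_eq_zero_of_sub_posSemidef (hA i) (hK i) hKx

theorem re_trace_pos {A : Matrix n n ℂ} (hA : A.PosSemidef) (h : A ≠ 0) :
    0 < A.trace.re :=
  (Complex.pos_iff.1 (hA.trace_nonneg.lt_of_ne' (mt hA.trace_eq_zero_iff.1 h))).1

end PositiveSemidefinite

section RankOne

open Filter Topology

variable {n : ℕ}

theorem posSemidef_outer (v : Fin n → ℂ) : (outer v).PosSemidef :=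
  posSemidef_vecMulVec_self_star v

theorem trace_mul_outer (A : Matrix (Fin n) (Fin n) ℂ) (v : Fin n → ℂ) :
    (A * outer v).trace = star v ⬝ᵥ A *ᵥ v := by
  rw [outer, mul_vecMulVec, trace_vecMulVec, dotProduct_comm]

theorem outer_mul_outer_self (v : Fin n → ℂ) :
    outer v * outer v = (star v ⬝ᵥ v).re • outer v := by
  have hreal : star v ⬝ᵥ v = ((star v ⬝ᵥ v).re : ℂ) :=
    Complex.eq_re_of_ofReal_le (dotProduct_star_self_nonneg v)
  rw [outer, vecMulVec_mul_vecMulVec, vecMulVec_smul, hreal, Complex.ofReal_re,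
    Complex.coe_smul]

theorem posSemidef_of_re_trace_mul_outer_nonneg {A : Matrix (Fin n) (Fin n) ℂ}
    (hA : A.IsHermitian) (h : ∀ v, 0 ≤ (A * outer v).trace.re) : A.PosSemidef := by
  refine .of_dotProduct_mulVec_nonneg hA fun v => Complex.nonneg_iff.2 ⟨?_, ?_⟩
  · simpa only [trace_mul_outer] using h v
  · exact (hA.im_star_dotProduct_mulVec_self v).symm

theorem eventually_posSemidef_one_sub_conjTranspose_mul_self (v : Fin n → ℂ) :
    ∀ᶠ ε : ℝ in 𝓝[>] 0,
      (1 - (1 - ε • outer v)ᴴ * (1 - ε • outer v) : Matrix (Fin n) (Fin n) ℂ).PosSemidef := by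
  set s := (star v ⬝ᵥ v).re
  have hlim : Tendsto (fun ε : ℝ => 2 - ε * s) (𝓝[>] 0) (𝓝 2) := by
    refine Tendsto.mono_left ?_ nhdsWithin_le_nhds
    exact (by fun_prop : Continuous fun ε : ℝ => 2 - ε * s).tendsto' 0 2 (by simp)
  filter_upwards [hlim.eventually_const_lt two_pos, self_mem_nhdsWithin] with ε hs hε
  have hexpand : (1 - (1 - ε • outer v)ᴴ * (1 - ε • outer v) : Matrix (Fin n) (Fin n) ℂ) =
      (ε * (2 - ε * s)) • outer v := by
    simp only [conjTranspose_one_sub_smul (posSemidef_outer v).1, mul_sub, sub_mul, one_mul,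
      mul_one, smul_mul_assoc, mul_smul_comm, outer_mul_outer_self]
    module
  rw [hexpand]
  exact (posSemidef_outer v).smul (mul_pos hε hs).le

end RankOne

section Measurement

variable {ι : Type} {n : ℕ} {p : ι → ℝ} {ρ P : ι → Matrix (Fin n) (Fin n) ℂ}

/-- The unnormalized state `pᵢ ρᵢ`. -/
def weightedState (p : ι → ℝ) (ρ : ι → Matrix (Fin n) (Fin n) ℂ) (i : ι) :
    Matrix (Fin n) (Fin n) ℂ :=
  (p i : ℂ) • ρ i

theorem isHermitian_weightedState (hρ : ∀ i, (ρ i).IsHermitian) (i : ι) :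
    (weightedState p ρ i).IsHermitian := by
  rw [weightedState, Complex.coe_smul]
  exact (hρ i).smul (IsSelfAdjoint.all (p i))

variable [Fintype ι]

/-- The operator `K = ∑ pᵢ ρᵢ Pᵢ`, with `Re Tr K` the success probability of `P`. It need not be
Hermitian in general; for optimal `P` it is, and is the Lagrange multiplier of `∑ Pᵢ = 1`. -/
def lagrangeOperator (p : ι → ℝ) (ρ P : ι → Matrix (Fin n) (Fin n) ℂ) :
    Matrix (Fin n) (Fin n) ℂ :=
  ∑ i, weightedState p ρ i * P i

/-- The measurement that compresses `P` by `C` and assigns the defect `1 - CᴴC` to outcome `j`. -/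
def redirect [DecidableEq ι] (P : ι → Matrix (Fin n) (Fin n) ℂ) (C : Matrix (Fin n) (Fin n) ℂ)
    (j : ι) : ι → Matrix (Fin n) (Fin n) ℂ :=
  (fun i => Cᴴ * P i * C) + Pi.single j (1 - Cᴴ * C)

/-- The gap `Re K - pⱼ ρⱼ`, where `K` is the Lagrange operator of `P` and `Re K` its Hermitian
part. Its positivity for all `j` is dual feasibility. -/
def dualGap (p : ι → ℝ) (ρ P : ι → Matrix (Fin n) (Fin n) ℂ) (j : ι) :
    Matrix (Fin n) (Fin n) ℂ :=
  (2 : ℝ)⁻¹ • (lagrangeOperator p ρ P + (lagrangeOperator p ρ P)ᴴ) - weightedState p ρ j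

theorem succProb_eq_re_trace_lagrangeOperator (E : ι → Matrix (Fin n) (Fin n) ℂ) :
    succProb p ρ E = (lagrangeOperator p ρ E).trace.re := by
  simp only [succProb, lagrangeOperator, weightedState, trace_sum, Complex.re_sum, smul_mul_assoc,
    trace_smul, smul_eq_mul, Complex.re_ofReal_mul]

theorem conjTranspose_lagrangeOperator (hρ : ∀ i, (ρ i).IsHermitian)
    (hP : ∀ i, (P i).IsHermitian) :
    (lagrangeOperator p ρ P)ᴴ = ∑ i, P i * weightedState p ρ i := by
  simp only [lagrangeOperator, conjTranspose_sum, conjTranspose_mul, (hP _).eq,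
    (isHermitian_weightedState hρ _).eq]

theorem isPOVM_single [DecidableEq ι] (j : ι) :
    IsPOVM (Pi.single j 1 : ι → Matrix (Fin n) (Fin n) ℂ) :=
  ⟨fun i => posSemidef_single .one i j, Fintype.sum_pi_single' j 1⟩

theorem isPOVM_redirect [DecidableEq ι] (hP : IsPOVM P) {C : Matrix (Fin n) (Fin n) ℂ}
    (hC : (1 - Cᴴ * C).PosSemidef) (j : ι) : IsPOVM (redirect P C j) := by
  refine ⟨fun i => ((hP.1 i).conjTranspose_mul_mul_same C).add (posSemidef_single hC i j), ?_⟩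
  simp only [redirect, Pi.add_apply, Finset.sum_add_distrib, Fintype.sum_pi_single',
    ← Finset.sum_mul, ← Finset.mul_sum, hP.2, mul_one, add_sub_cancel]

section Existence

open scoped MatrixOrder Matrix.Norms.L2Operator

theorem isCompact_setOf_isPOVM :
    IsCompact {E : ι → Matrix (Fin n) (Fin n) ℂ | IsPOVM E} := by
  have : ProperSpace (ι → Matrix (Fin n) (Fin n) ℂ) := FiniteDimensional.proper ℂ _
  have heq : {E : ι → Matrix (Fin n) (Fin n) ℂ | IsPOVM E} =
      Set.Ici 0 ∩ {E | ∑ i, E i = 1} := by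
    ext E
    simp only [IsPOVM, ← nonneg_iff_posSemidef, Set.mem_inter_iff, Set.mem_Ici, Pi.le_def,
      Set.mem_ofPred_eq, Pi.zero_apply]
  have hclosed : IsClosed {E : ι → Matrix (Fin n) (Fin n) ℂ | IsPOVM E} := by
    rw [heq]
    exact isClosed_Ici.inter (isClosed_eq (by fun_prop) continuous_const)
  refine (isCompact_closedBall 0 1).of_isClosed_subset hclosed fun E hE => ?_
  rw [mem_closedBall_zero_iff, pi_norm_le_iff_of_nonneg zero_le_one]
  intro i
  have hle : E i ≤ 1 :=
    hE.2 ▸ Finset.single_le_sum (fun j _ => (hE.1 j).nonneg) (Finset.mem_univ i)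
  exact (CStarAlgebra.norm_le_one_iff_of_nonneg (E i) (hE.1 i).nonneg).2 hle

theorem exists_isOptimal [Nonempty ι] (p : ι → ℝ) (ρ : ι → Matrix (Fin n) (Fin n) ℂ) :
    ∃ P, IsOptimal p ρ P := by
  classical
  have hcont : Continuous (succProb p ρ) := by
    unfold succProb
    fun_prop
  obtain ⟨P, hP, hmax⟩ := isCompact_setOf_isPOVM.exists_isMaxOn
    ⟨_, isPOVM_single (Classical.arbitrary ι)⟩ hcont.continuousOn
  exact ⟨P, hP, fun E hE => hmax hE⟩

end Existence

section OptimalityConditions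

open Filter Topology

theorem nonpos_of_eventually_quadratic_nonpos {a b : ℝ}
    (h : ∀ᶠ ε : ℝ in 𝓝[>] 0, ε * a + ε ^ 2 * b ≤ 0) : a ≤ 0 := by
  have hlim : Tendsto (fun ε : ℝ => a + ε * b) (𝓝[>] 0) (𝓝 a) := by
    refine Tendsto.mono_left ?_ nhdsWithin_le_nhds
    exact (by fun_prop : Continuous fun ε : ℝ => a + ε * b).tendsto' 0 a (by simp)
  refine le_of_tendsto hlim ?_
  filter_upwards [h, self_mem_nhdsWithin] with ε hε hpos
  exact nonpos_of_mul_nonpos_right (by linarith : ε * (a + ε * b) ≤ 0) hpos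

theorem lagrangeOperator_redirect [DecidableEq ι] (C : Matrix (Fin n) (Fin n) ℂ) (j : ι) :
    lagrangeOperator p ρ (redirect P C j) =
      ∑ i, weightedState p ρ i * (Cᴴ * P i * C) + weightedState p ρ j * (1 - Cᴴ * C) := by
  simp only [lagrangeOperator, redirect, Pi.add_apply, mul_add, Finset.sum_add_distrib,
    Pi.single_apply, mul_ite, mul_zero, Finset.sum_ite_eq', Finset.mem_univ, if_true]

theorem lagrangeOperator_redirect_one_sub_smul [DecidableEq ι] {V : Matrix (Fin n) (Fin n) ℂ}
    (hV : V.IsHermitian) (j : ι) (ε : ℝ) :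
    lagrangeOperator p ρ (redirect P (1 - ε • V) j) = lagrangeOperator p ρ P
      - ε • (∑ i, weightedState p ρ i * V * P i + lagrangeOperator p ρ P * V
        - (2 : ℝ) • (weightedState p ρ j * V))
      + ε ^ 2 • (∑ i, weightedState p ρ i * V * P i * V - weightedState p ρ j * V * V) := by
  have hterm (i : ι) : weightedState p ρ i * ((1 - ε • V) * P i * (1 - ε • V)) =
      weightedState p ρ i * P i - ε • (weightedState p ρ i * V * P i)
        - ε • (weightedState p ρ i * P i * V) + ε ^ 2 • (weightedState p ρ i * V * P i * V) := by
    simp only [mul_sub, sub_mul, mul_one, one_mul, mul_smul_comm, smul_mul_assoc, mul_assoc]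
    module
  have hdefect : weightedState p ρ j * (1 - (1 - ε • V) * (1 - ε • V)) =
      (2 * ε) • (weightedState p ρ j * V) - ε ^ 2 • (weightedState p ρ j * V * V) := by
    simp only [mul_sub, sub_mul, mul_one, one_mul, mul_smul_comm, smul_mul_assoc, mul_assoc]
    module
  simp only [lagrangeOperator_redirect, conjTranspose_one_sub_smul hV, hterm, hdefect,
    Finset.sum_add_distrib, Finset.sum_sub_distrib, ← Finset.smul_sum, ← Finset.sum_mul]
  simp only [lagrangeOperator]
  module

theorem succProb_redirect_one_sub_smul [DecidableEq ι] (hρ : ∀ i, (ρ i).IsHermitian)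
    (hP : ∀ i, (P i).IsHermitian) {V : Matrix (Fin n) (Fin n) ℂ} (hV : V.IsHermitian) (j : ι)
    (ε : ℝ) :
    succProb p ρ (redirect P (1 - ε • V) j) = succProb p ρ P -
      ε * (2 * (dualGap p ρ P j * V).trace.re) +
      ε ^ 2 * (∑ i, weightedState p ρ i * V * P i * V - weightedState p ρ j * V * V).trace.re := by
  have hadjoint : (∑ i, weightedState p ρ i * V * P i).trace =
      ((lagrangeOperator p ρ P)ᴴ * V).trace := by
    simp only [conjTranspose_lagrangeOperator hρ hP, Finset.sum_mul, trace_sum]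
    exact Finset.sum_congr rfl fun i _ => by rw [trace_mul_comm, ← mul_assoc]
  simp only [succProb_eq_re_trace_lagrangeOperator, lagrangeOperator_redirect_one_sub_smul hV,
    dualGap, add_mul, sub_mul, trace_add, trace_sub, trace_smul, hadjoint, smul_mul_assoc,
    Complex.add_re, Complex.sub_re, Complex.smul_re, smul_eq_mul]
  ring

theorem isHermitian_dualGap (hρ : ∀ i, (ρ i).IsHermitian) (j : ι) :
    (dualGap p ρ P j).IsHermitian :=
  ((isHermitian_add_transpose_self _).smul (IsSelfAdjoint.all _)).sub
    (isHermitian_weightedState hρ j)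

theorem IsOptimal.posSemidef_dualGap (hP : IsOptimal p ρ P) (hρ : ∀ i, (ρ i).IsHermitian) (j : ι) :
    (dualGap p ρ P j).PosSemidef := by
  classical
  refine posSemidef_of_re_trace_mul_outer_nonneg (isHermitian_dualGap hρ j) fun v => ?_
  suffices -(2 * (dualGap p ρ P j * outer v).trace.re) ≤ 0 by linarith
  refine nonpos_of_eventually_quadratic_nonpos
    (b := (∑ i, weightedState p ρ i * outer v * P i * outer v
      - weightedState p ρ j * outer v * outer v).trace.re) ?_
  filter_upwards [eventually_posSemidef_one_sub_conjTranspose_mul_self v] with ε hε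
  have hle := hP.2 _ (isPOVM_redirect hP.1 hε j)
  rw [succProb_redirect_one_sub_smul hρ (fun i => (hP.1.1 i).1) (posSemidef_outer v).1] at hle
  linarith

theorem sum_dualGap_mul (hP : ∑ i, P i = 1) :
    ∑ j, dualGap p ρ P j * P j =
      (2 : ℝ)⁻¹ • ((lagrangeOperator p ρ P)ᴴ - lagrangeOperator p ρ P) := by
  simp only [dualGap, sub_mul, Finset.sum_sub_distrib, ← Finset.mul_sum, hP, mul_one]
  simp only [lagrangeOperator]
  module

theorem trace_conjTranspose_lagrangeOperator (hρ : ∀ i, (ρ i).IsHermitian)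
    (hP : ∀ i, (P i).IsHermitian) :
    (lagrangeOperator p ρ P)ᴴ.trace = (lagrangeOperator p ρ P).trace := by
  rw [conjTranspose_lagrangeOperator hρ hP, lagrangeOperator, trace_sum, trace_sum]
  exact Finset.sum_congr rfl fun i _ => trace_mul_comm _ _

theorem IsOptimal.dualGap_mul_eq_zero (hP : IsOptimal p ρ P) (hρ : ∀ i, (ρ i).IsHermitian)
    (j : ι) : dualGap p ρ P j * P j = 0 := by
  have hgap := hP.posSemidef_dualGap hρ
  have hsum : ∑ i, (dualGap p ρ P i * P i).trace = 0 := by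
    rw [← trace_sum, sum_dualGap_mul hP.1.2, trace_smul, trace_sub,
      trace_conjTranspose_lagrangeOperator hρ fun i => (hP.1.1 i).1, sub_self, smul_zero]
  have hnonneg (i : ι) : 0 ≤ (dualGap p ρ P i * P i).trace :=
    trace_mul_nonneg_of_posSemidef (hgap i) (hP.1.1 i)
  exact mul_eq_zero_of_trace_mul_eq_zero (hgap j) (hP.1.1 j)
    ((Finset.sum_eq_zero_iff_of_nonneg fun i _ => hnonneg i).1 hsum j (Finset.mem_univ j))

theorem IsOptimal.isHermitian_lagrangeOperator (hP : IsOptimal p ρ P)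
    (hρ : ∀ i, (ρ i).IsHermitian) : (lagrangeOperator p ρ P).IsHermitian := by
  have hsum := sum_dualGap_mul (p := p) (ρ := ρ) hP.1.2
  simp only [hP.dualGap_mul_eq_zero hρ, Finset.sum_const_zero] at hsum
  exact sub_eq_zero.1 ((smul_eq_zero_iff_right (by norm_num)).1 hsum.symm)

theorem IsOptimal.dualGap_eq (hP : IsOptimal p ρ P) (hρ : ∀ i, (ρ i).IsHermitian) (j : ι) :
    dualGap p ρ P j = lagrangeOperator p ρ P - weightedState p ρ j := by
  rw [dualGap, (hP.isHermitian_lagrangeOperator hρ).eq]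
  module

theorem IsOptimal.posSemidef_lagrangeOperator_sub (hP : IsOptimal p ρ P)
    (hρ : ∀ i, (ρ i).IsHermitian) (j : ι) :
    (lagrangeOperator p ρ P - weightedState p ρ j).PosSemidef :=
  hP.dualGap_eq hρ j ▸ hP.posSemidef_dualGap hρ j

theorem IsOptimal.lagrangeOperator_mul (hP : IsOptimal p ρ P) (hρ : ∀ i, (ρ i).IsHermitian)
    (j : ι) : lagrangeOperator p ρ P * P j = weightedState p ρ j * P j := by
  rw [← sub_eq_zero, ← sub_mul, ← hP.dualGap_eq hρ, hP.dualGap_mul_eq_zero hρ]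

end OptimalityConditions

section PrettyGoodMeasurement

theorem exists_isEnsemble_smul_eq [Nonempty ι] {T : ι → Matrix (Fin n) (Fin n) ℂ}
    (hT : ∀ i, (T i).PosSemidef) (hne : ∀ i, T i ≠ 0) :
    ∃ (c : ℝ) (q : ι → ℝ) (σ : ι → Matrix (Fin n) (Fin n) ℂ),
      0 < c ∧ IsEnsemble q σ ∧ ∀ i, (q i : ℂ) • σ i = c • T i := by
  set t : ι → ℝ := fun i => (T i).trace.re
  have ht (i : ι) : 0 < t i := re_trace_pos (hT i) (hne i)
  have htrace (i : ι) : (T i).trace = t i :=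
    Complex.eq_re_of_ofReal_le (hT i).trace_nonneg
  have hsum : 0 < ∑ i, t i := Finset.sum_pos (fun i _ => ht i) Finset.univ_nonempty
  refine ⟨(∑ i, t i)⁻¹, fun i => t i / ∑ i, t i, fun i => (t i)⁻¹ • T i, inv_pos.2 hsum,
    ⟨fun i => div_pos (ht i) hsum, ?_, fun i => (hT i).smul (inv_pos.2 (ht i)).le, fun i => ?_⟩,
    fun i => ?_⟩
  · rw [← Finset.sum_div, div_self hsum.ne']
  · rw [trace_smul, htrace, Complex.real_smul, ← Complex.ofReal_mul, inv_mul_cancel₀ (ht i).ne',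
      Complex.ofReal_one]
  · rw [Complex.coe_smul, smul_smul, div_mul_eq_mul_div, mul_inv_cancel₀ (ht i).ne', one_div]

theorem IsLIEnsemble.of_range_eq {q : ι → ℝ} {σ : ι → Matrix (Fin n) (Fin n) ℂ}
    (hρ : IsLIEnsemble p ρ) (hσ : IsEnsemble q σ)
    (hrange : ∀ i, LinearMap.range (σ i).mulVecLin = LinearMap.range (ρ i).mulVecLin) :
    IsLIEnsemble q σ := by
  have hrank (i : ι) : (σ i).rank = (ρ i).rank := by
    unfold Matrix.rank
    rw [hrange i]
  exact ⟨hσ, (Fintype.sum_congr _ _ hrank).trans hρ.2.1, (iSup_congr hrange).trans hρ.2.2⟩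

theorem inv_mul_mul_inv_eq_of_eq_smul {K R : Matrix (Fin n) (Fin n) ℂ} {c : ℝ}
    {T : ι → Matrix (Fin n) (Fin n) ℂ} (hP : ∑ i, P i = 1) (hK : K.PosSemidef) (hc : 0 ≤ c)
    (hT : ∀ i, T i = c • (K * P i * K)) (hR : R.PosDef) (hRR : R * R = ∑ i, T i) (i : ι) :
    R⁻¹ * T i * R⁻¹ = P i := by
  have hRK : R = √c • K := by
    refine eq_of_mul_self_eq_mul_self hR.posSemidef (hK.smul (Real.sqrt_nonneg c)) ?_
    simp only [hRR, hT, ← Finset.smul_sum, ← Finset.sum_mul, ← Finset.mul_sum, hP, mul_one,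
      smul_mul_smul_comm, Real.mul_self_sqrt hc]
  have hTR : T i = R * P i * R := by
    rw [hT, hRK, smul_mul_assoc, smul_mul_smul_comm, Real.mul_self_sqrt hc]
  have hdet : IsUnit R.det := (isUnit_iff_isUnit_det R).1 hR.isUnit
  rw [hTR, mul_assoc R, nonsing_inv_mul_cancel_left _ _ hdet, mul_nonsing_inv_cancel_right _ _ hdet]

end PrettyGoodMeasurement

section LinearlyIndependent

theorem IsEnsemble.nonempty (h : IsEnsemble p ρ) : Nonempty ι := by
  by_contra hempty
  rw [not_nonempty_iff] at hempty
  simpa using h.2.1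

theorem IsEnsemble.ne_zero (h : IsEnsemble p ρ) (i : ι) : ρ i ≠ 0 := by
  intro hzero
  simpa [hzero] using h.2.2.2 i

theorem IsEnsemble.posSemidef_weightedState (h : IsEnsemble p ρ) (i : ι) :
    (weightedState p ρ i).PosSemidef :=
  (h.2.2.1 i).smul (Complex.zero_le_real.2 (h.1 i).le)

theorem IsEnsemble.range_weightedState (h : IsEnsemble p ρ) (i : ι) :
    LinearMap.range (weightedState p ρ i).mulVecLin = LinearMap.range (ρ i).mulVecLin :=
  range_mulVecLin_smul (Complex.ofReal_ne_zero.2 (h.1 i).ne') (ρ i)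

theorem IsLIEnsemble.posDef_lagrangeOperator (h : IsLIEnsemble p ρ) (hP : IsOptimal p ρ P) :
    (lagrangeOperator p ρ P).PosDef := by
  have := h.1.nonempty
  refine posDef_of_sub_posSemidef h.1.posSemidef_weightedState ?_
    (hP.posSemidef_lagrangeOperator_sub fun i => (h.1.2.2.1 i).1)
  exact (iSup_congr h.1.range_weightedState).trans h.2.2

theorem IsLIEnsemble.range_conj_lagrangeOperator (h : IsLIEnsemble p ρ) (hP : IsOptimal p ρ P)
    (i : ι) :
    LinearMap.range (lagrangeOperator p ρ P * P i * lagrangeOperator p ρ P).mulVecLin =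
      LinearMap.range (ρ i).mulVecLin := by
  have hdet := (isUnit_iff_isUnit_det _).1 (h.posDef_lagrangeOperator hP).isUnit
  have hrank : ∑ i, (ρ i).rank = Fintype.card (Fin n) := h.2.1.trans (Fintype.card_fin n).symm
  refine range_mulVecLin_mul_mul_eq hdet hP.1.2 hrank (fun j => ?_) i
  rw [hP.lagrangeOperator_mul fun i => (h.1.2.2.1 i).1, ← h.1.range_weightedState j]
  exact range_mulVecLin_mul_le _ _

theorem IsLIEnsemble.exists_prettyGood_eq (h : IsLIEnsemble p ρ) (hP : IsOptimal p ρ P) :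
    ∃ (q : ι → ℝ) (σ : ι → Matrix (Fin n) (Fin n) ℂ), IsLIEnsemble q σ ∧
      (∀ i, LinearMap.range (σ i).mulVecLin = LinearMap.range (ρ i).mulVecLin) ∧
      ∀ R : Matrix (Fin n) (Fin n) ℂ, R.PosDef → R * R = ∑ j, (q j : ℂ) • σ j →
        ∀ i, R⁻¹ * ((q i : ℂ) • σ i) * R⁻¹ = P i := by
  have := h.1.nonempty
  set K := lagrangeOperator p ρ P
  have hK : K.PosDef := h.posDef_lagrangeOperator hP
  have hpos (i : ι) : (K * P i * K).PosSemidef := by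
    simpa only [hK.1.eq] using (hP.1.1 i).conjTranspose_mul_mul_same K
  have hne (i : ι) : K * P i * K ≠ 0 := fun hzero => h.1.ne_zero i <| by
    have hrange := h.range_conj_lagrangeOperator hP i
    rw [hzero, mulVecLin_zero, LinearMap.range_zero, eq_comm, LinearMap.range_eq_bot] at hrange
    exact toLin'.injective (hrange.trans (map_zero _).symm)
  obtain ⟨c, q, σ, hc, hσ, hqσ⟩ := exists_isEnsemble_smul_eq hpos hne
  have hrange (i : ι) : LinearMap.range (σ i).mulVecLin = LinearMap.range (ρ i).mulVecLin := by
    rw [← hσ.range_weightedState, weightedState, hqσ, ← Complex.coe_smul,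
      range_mulVecLin_smul (Complex.ofReal_ne_zero.2 hc.ne'), h.range_conj_lagrangeOperator hP]
  exact ⟨q, σ, h.of_range_eq hσ hrange, hrange, fun R hR hRR =>
    inv_mul_mul_inv_eq_of_eq_smul hP.1.2 hK.posSemidef hc.le hqσ hR hRR⟩

end LinearlyIndependent

end Measurement

/-- For every LI ensemble `(p, ρ)` there is an LI ensemble `(q, σ)`, with each `σᵢ`
having the same column space as `ρᵢ`, whose pretty good measurement is an optimal POVM
for the minimum error discrimination of `(p, ρ)`. -/
theorem stmt_15 {m n : ℕ} (p : Fin m → ℝ) (ρ : Fin m → Matrix (Fin n) (Fin n) ℂ)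
    (hens : IsLIEnsemble p ρ) :
    ∃ (q : Fin m → ℝ) (σ : Fin m → Matrix (Fin n) (Fin n) ℂ),
      IsLIEnsemble q σ ∧
      (∀ i, LinearMap.range (σ i).mulVecLin = LinearMap.range (ρ i).mulVecLin) ∧
      PGMIsOptimal q σ p ρ := by
  have := hens.1.nonempty
  obtain ⟨P, hP⟩ := exists_isOptimal p ρ
  obtain ⟨q, σ, hσ, hrange, hpgm⟩ := hens.exists_prettyGood_eq hP
  refine ⟨q, σ, hσ, hrange, fun R hR hRR => ?_⟩
  rwa [funext (hpgm R hR hRR)]
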